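/- Let ⟨ω₁, …, ω_{n+2}⟩ be an (n+2)-web of hypersurfaces on U. If Γ and Γ' are two torsion-free affine connections on U for which this web is geodesic, then Γ and Γ' are projectively equivalent. Hence every (n+2)-web of hypersurfaces determines a unique projective structure on U (the class of projectively equivalent torsion-free connections for which it is geodesic). -/

import Mathlib

open scoped BigOperators

/-- Partial derivative in the `i`-th coordinate direction. -/
noncomputable def pd {n : ℕ} (i : Fin n) (f : (Fin n → ℝ) → ℝ) (x : Fin n → ℝ) : ℝ :=
  fderiv ℝ f x (Pi.single i 1)

/-- A torsion-free affine connection on `U`, given by its Christoffel symbols `Γ k i j`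
(smooth on `U` and symmetric in the lower indices `i j`). -/
def IsTorsionFreeConn {n : ℕ} (U : Set (Fin n → ℝ))
    (Γ : Fin n → Fin n → Fin n → (Fin n → ℝ) → ℝ) : Prop :=
  (∀ k i j, ContDiffOn ℝ (⊤ : ℕ∞) (Γ k i j) U) ∧ (∀ k i j x, Γ k i j x = Γ k j i x)

/-- `γ` is a geodesic of `Γ` on the set `I ⊆ ℝ`, with image in `U`. -/
def IsGeodesicOn {n : ℕ} (U : Set (Fin n → ℝ))
    (Γ : Fin n → Fin n → Fin n → (Fin n → ℝ) → ℝ)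
    (I : Set ℝ) (γ : ℝ → Fin n → ℝ) : Prop :=
  (∀ t ∈ I, γ t ∈ U) ∧ ContDiffOn ℝ 2 γ I ∧
    ∀ t ∈ I, ∀ k, deriv (fun s => deriv (fun u => γ u k) s) t +
      ∑ i, ∑ j, Γ k i j (γ t) * deriv (fun u => γ u i) t * deriv (fun u => γ u j) t = 0

/-- The codimension-one foliation defined by the `1`-form `ω` is totally geodesic for `Γ`:
every geodesic tangent to a leaf at time `0` stays tangent to the kernel of `ω`. -/
def TotallyGeodesic {n : ℕ} (U : Set (Fin n → ℝ))
    (Γ : Fin n → Fin n → Fin n → (Fin n → ℝ) → ℝ)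
    (ω : (Fin n → ℝ) → Fin n → ℝ) : Prop :=
  ∀ I : Set ℝ, IsOpen I → I.OrdConnected → (0 : ℝ) ∈ I →
    ∀ γ : ℝ → Fin n → ℝ, IsGeodesicOn U Γ I γ →
      (∑ k, ω (γ 0) k * deriv (fun u => γ u k) 0) = 0 →
      ∀ t ∈ I, (∑ k, ω (γ t) k * deriv (fun u => γ u k) t) = 0

/-- `ω` is a smooth nonvanishing `1`-form on `U` satisfying the integrability
condition `ω ∧ dω = 0`. -/
def IsFoliationForm {n : ℕ} (U : Set (Fin n → ℝ)) (ω : (Fin n → ℝ) → Fin n → ℝ) : Prop :=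
  ContDiffOn ℝ (⊤ : ℕ∞) ω U ∧ (∀ x ∈ U, ω x ≠ 0) ∧
    ∀ x ∈ U, ∀ i j k,
      ω x i * (pd j (fun y => ω y k) x - pd k (fun y => ω y j) x) +
      ω x j * (pd k (fun y => ω y i) x - pd i (fun y => ω y k) x) +
      ω x k * (pd i (fun y => ω y j) x - pd j (fun y => ω y i) x) = 0

/-- Components of the symmetric covariant differential `d^s_Γ ω`. -/
noncomputable def dsym {n : ℕ} (Γ : Fin n → Fin n → Fin n → (Fin n → ℝ) → ℝ)
    (ω : (Fin n → ℝ) → Fin n → ℝ) (i j : Fin n) (x : Fin n → ℝ) : ℝ :=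
  (pd i (fun y => ω y j) x + pd j (fun y => ω y i) x) / 2 - ∑ k, Γ k i j x * ω x k

/-- Components of the symmetric product `θ·ω` of two `1`-forms. -/
noncomputable def symProd {n : ℕ} (θ ω : (Fin n → ℝ) → Fin n → ℝ) (i j : Fin n) (x : Fin n → ℝ) : ℝ :=
  (θ x i * ω x j + θ x j * ω x i) / 2

/-- A `d`-web of hypersurfaces on `U`: a family of smooth nonvanishing integrable `1`-forms,
any `n` of which are linearly independent at every point of `U`. -/
def IsWeb {n d : ℕ} (U : Set (Fin n → ℝ)) (ωs : Fin d → (Fin n → ℝ) → Fin n → ℝ) : Prop :=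
  (∀ i, IsFoliationForm U (ωs i)) ∧
    ∀ x ∈ U, ∀ σ : Fin n → Fin d, Function.Injective σ →
      LinearIndependent ℝ (fun i => ωs (σ i) x)

/-- `Γ` and `Γ'` are projectively equivalent on `U`:
`Γ'ᵏᵢⱼ = Γᵏᵢⱼ + δᵏᵢ ρⱼ + δᵏⱼ ρᵢ` for some smooth `1`-form `ρ`. -/
def ProjEquiv {n : ℕ} (U : Set (Fin n → ℝ))
    (Γ Γ' : Fin n → Fin n → Fin n → (Fin n → ℝ) → ℝ) : Prop :=
  ∃ ρ : (Fin n → ℝ) → Fin n → ℝ, ContDiffOn ℝ (⊤ : ℕ∞) ρ U ∧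
    ∀ x ∈ U, ∀ k i j, Γ' k i j x =
      Γ k i j x + (if k = i then ρ x j else 0) + (if k = j then ρ x i else 0)

/-- `X` is the frame of vector fields dual to the coframe `ωs` on `U`. -/
def IsDualFrame {n : ℕ} (U : Set (Fin n → ℝ)) (ωs : Fin n → (Fin n → ℝ) → Fin n → ℝ)
    (X : Fin n → (Fin n → ℝ) → Fin n → ℝ) : Prop :=
  (∀ i, ContDiffOn ℝ (⊤ : ℕ∞) (X i) U) ∧
    ∀ x ∈ U, ∀ i j, (∑ k, ωs i x k * X j x k) = if i = j then 1 else 0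

/-- The web invariants `s^a_{ij} = (1/(aᵢ−aⱼ))·(aᵢ ∂ⱼ − aⱼ ∂ᵢ) log (aⱼ/aᵢ)`, where `∂ᵢ`
is derivation along the frame vector field `X i`. -/
noncomputable def sInv {n : ℕ} (X : Fin n → (Fin n → ℝ) → Fin n → ℝ)
    (a : Fin n → (Fin n → ℝ) → ℝ) (i j : Fin n) (x : Fin n → ℝ) : ℝ :=
  (1 / (a i x - a j x)) *
    (a i x * (fderiv ℝ (a j) x (X j x) / a j x - fderiv ℝ (a i) x (X j x) / a i x) -
     a j x * (fderiv ℝ (a j) x (X i x) / a j x - fderiv ℝ (a i) x (X i x) / a i x))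

/-- The curvature tensor `Rᵏₗᵢⱼ` of the connection `Γ`. -/
noncomputable def curv {n : ℕ} (Γ : Fin n → Fin n → Fin n → (Fin n → ℝ) → ℝ)
    (k l i j : Fin n) (x : Fin n → ℝ) : ℝ :=
  pd i (Γ k j l) x - pd j (Γ k i l) x +
    ∑ m, (Γ k i m x * Γ m j l x - Γ k j m x * Γ m i l x)

/-!
Differentiating `ω(γ̇) = 0` along geodesics shows that, for a totally geodesic foliation `ω = 0`,
the value `ω(Γ(v, v))` depends only on `ω` whenever `ω(v) = 0`. Hence the quadratic map
`v ↦ B(v, v)` attached to the difference `B = Γ' - Γ` preserves, at each point, the kernels of all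
the web covectors. In the basis dual to `n` of them it preserves the axes and the coordinate
planes. On such a plane the binary cubic `v ∧ B(v, v)` vanishes on both axes and on the traces of
two further kernels. These are four distinct lines, so the cubic is identically zero, which forces
`B(u, v) = m(u) v + m(v) u`.
-/

open Module Set Filter Topology

section Algebra

variable {K V : Type*} [Field K] [AddCommGroup V] [Module K V]

/-- The hyperplane `ker f` is stable under the quadratic map `v ↦ B v v`. This is what total
geodesy imposes, pointwise, on the difference `B` of two torsion-free connections. -/
def KerInvariant (B : V →ₗ[K] V →ₗ[K] V) (f : Dual K V) : Prop :=
  ∀ ⦃v⦄, f v = 0 → f (B v v) = 0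

/-- A family of covectors is in general position: any `dim V` of them are linearly independent. -/
def InGeneralPosition {ι : Type*} (w : ι → Dual K V) : Prop :=
  ∀ s : Finset ι, s.card = finrank K V → LinearIndepOn K w s

namespace InGeneralPosition

variable [FiniteDimensional K V] {ι : Type*} {w : ι → Dual K V}

theorem eq_zero_of_forall_apply_eq_zero (hw : InGeneralPosition w) {s : Finset ι}
    (hs : s.card = finrank K V) {v : V} (hv : ∀ c ∈ s, w c v = 0) : v = 0 := by
  have hspan : Submodule.span K (range fun c : s => w c) = ⊤ :=
    (hw s hs).span_eq_top_of_card_eq_finrank' (by simp [hs, Subspace.dual_finrank_eq])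
  have hle : Submodule.span K (range fun c : s => w c) ≤ LinearMap.ker (Dual.eval K V v) :=
    Submodule.span_le.2 (range_subset_iff.2 fun c => hv c c.2)
  exact (forall_dual_apply_eq_zero_iff K v).1 fun f => hle (hspan ▸ Submodule.mem_top)

theorem exists_basis_coord_eq (hw : InGeneralPosition w) {s : Finset ι}
    (hs : s.card = finrank K V) : ∃ e : Basis s K V, ∀ a, e.coord a = w a := by
  let φ : V →ₗ[K] s → K := LinearMap.pi fun a => w a
  have hφ : Function.Injective φ := (injective_iff_map_eq_zero φ).2 fun v hv =>
    hw.eq_zero_of_forall_apply_eq_zero hs fun c hc => congrFun hv ⟨c, hc⟩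
  refine ⟨Basis.ofEquivFun (LinearEquiv.ofInjectiveOfFinrankEq φ hφ (by simp [hs])), fun a => ?_⟩
  ext v
  simp [φ, LinearEquiv.ofInjectiveOfFinrankEq]

theorem apply_basis_ne_zero (hw : InGeneralPosition w) {s : Finset ι}
    (hs : s.card = finrank K V) {e : Basis s K V} (he : ∀ a, e.coord a = w a) {r : ι}
    (hr : r ∉ s) (a : s) : w r (e a) ≠ 0 := by
  classical
  intro hra
  have hcard : (insert r (s.erase a)).card = finrank K V := by
    rw [Finset.card_insert_of_notMem (by simp [hr]), Finset.card_erase_add_one a.2, hs]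
  refine e.ne_zero a (hw.eq_zero_of_forall_apply_eq_zero hcard fun c hc => ?_)
  obtain rfl | hc := Finset.mem_insert.1 hc
  · exact hra
  · obtain ⟨hca, hcs⟩ := Finset.mem_erase.1 hc
    simp [← he ⟨c, hcs⟩, Subtype.ext_iff, hca.symm]

theorem apply_basis_mul_ne (hw : InGeneralPosition w) {s : Finset ι}
    (hs : s.card = finrank K V) {e : Basis s K V} (he : ∀ a, e.coord a = w a) {p q : ι}
    (hp : p ∉ s) (hq : q ∉ s) (hpq : p ≠ q) {a b : s} (hab : a ≠ b) :
    w p (e a) * w q (e b) ≠ w p (e b) * w q (e a) := by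
  classical
  intro hminor
  have hcard : (insert p (insert q ((s.erase a).erase b))).card = finrank K V := by
    rw [Finset.card_insert_of_notMem (by simp [hp, hpq]),
      Finset.card_insert_of_notMem (by simp [hq]),
      Finset.card_erase_add_one
        (Finset.mem_erase.2 ⟨fun hba => hab (Subtype.ext hba.symm), b.2⟩),
      Finset.card_erase_add_one a.2, hs]
  have hzero : w p (e b) • e a - w p (e a) • e b = 0 := by
    refine hw.eq_zero_of_forall_apply_eq_zero hcard fun c hc => ?_
    obtain rfl | rfl | ⟨hcb, hca, hcs⟩ : c = p ∨ c = q ∨ c ≠ b ∧ c ≠ a ∧ c ∈ s := by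
      simpa using hc
    · simp [mul_comm]
    · simp [hminor]
    · simp [← he ⟨c, hcs⟩, Subtype.ext_iff, hca.symm, hcb.symm]
  refine hw.apply_basis_ne_zero hs he hp b ?_
  simpa [hab.symm] using congrArg (e.coord a) hzero

end InGeneralPosition

theorem apply_basis_self_eq_smul {ι : Type*} {e : Basis ι K V} {B : V →ₗ[K] V →ₗ[K] V}
    (he : ∀ a, KerInvariant B (e.coord a)) (a : ι) :
    B (e a) (e a) = e.coord a (B (e a) (e a)) • e a := by
  refine e.ext_elem fun c => ?_
  obtain rfl | hca := eq_or_ne a c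
  · simp
  · have hc : e.repr (B (e a) (e a)) c = 0 := he c (by simp [hca])
    simp [hc, hca]

section Symmetric

variable [NeZero (2 : K)] {B : V →ₗ[K] V →ₗ[K] V}

theorem KerInvariant.apply_apply_eq_zero {f : Dual K V} (hB : KerInvariant B f)
    (hsymm : ∀ u v, B u v = B v u) {u v : V} (hu : f u = 0) (hv : f v = 0) : f (B u v) = 0 := by
  have hpolar := hB (v := u + v) (by simp [hu, hv])
  simp only [map_add, LinearMap.add_apply, hB hu, hB hv, hsymm v u, zero_add, add_zero] at hpolar
  rw [← two_mul] at hpolar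
  exact (mul_eq_zero.1 hpolar).resolve_left two_ne_zero

section Plane

variable {e₁ e₂ : V} {α β x y : K}

theorem KerInvariant.mul_sub_add_mul_sub_eq_zero {f : Dual K V} (hB : KerInvariant B f)
    (hsymm : ∀ u v, B u v = B v u) (h₁₁ : B e₁ e₁ = (2 * α) • e₁) (h₂₂ : B e₂ e₂ = (2 * β) • e₂)
    (h₁₂ : B e₁ e₂ = x • e₁ + y • e₂) (hf₁ : f e₁ ≠ 0) (hf₂ : f e₂ ≠ 0) :
    f e₁ * (x - β) + f e₂ * (y - α) = 0 := by
  have hker := hB (v := f e₂ • e₁ - f e₁ • e₂) (by simp; ring)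
  simp only [map_sub, map_smul, LinearMap.sub_apply, LinearMap.smul_apply, hsymm e₂ e₁, h₁₁, h₂₂,
    h₁₂, map_add, smul_eq_mul] at hker
  have hprod : 2 * (f e₁ * f e₂) * (f e₁ * (x - β) + f e₂ * (y - α)) = 0 := by
    linear_combination -hker
  exact (mul_eq_zero.1 hprod).resolve_left (mul_ne_zero two_ne_zero (mul_ne_zero hf₁ hf₂))

/-- The binary cubic `u ∧ B u u` on the plane spanned by `e₁` and `e₂` has four distinct zeros:
the two axes and the kernels of `p` and `q`. Hence it vanishes identically. -/
theorem apply_apply_eq_of_kerInvariant_of_kerInvariant {p q : Dual K V}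
    (hp : KerInvariant B p) (hq : KerInvariant B q) (hsymm : ∀ u v, B u v = B v u)
    (h₁₁ : B e₁ e₁ = (2 * α) • e₁) (h₂₂ : B e₂ e₂ = (2 * β) • e₂)
    (h₁₂ : B e₁ e₂ = x • e₁ + y • e₂) (hp₁ : p e₁ ≠ 0) (hp₂ : p e₂ ≠ 0) (hq₁ : q e₁ ≠ 0)
    (hq₂ : q e₂ ≠ 0) (hpq : p e₁ * q e₂ ≠ p e₂ * q e₁) :
    B e₁ e₂ = α • e₂ + β • e₁ := by
  have hp_rel := hp.mul_sub_add_mul_sub_eq_zero hsymm h₁₁ h₂₂ h₁₂ hp₁ hp₂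
  have hq_rel := hq.mul_sub_add_mul_sub_eq_zero hsymm h₁₁ h₂₂ h₁₂ hq₁ hq₂
  have hx : x = β := sub_eq_zero.1 <| (mul_eq_zero.1 (by
    linear_combination q e₂ * hp_rel - p e₂ * hq_rel :
      (p e₁ * q e₂ - p e₂ * q e₁) * (x - β) = 0)).resolve_left (sub_ne_zero.2 hpq)
  have hy : y = α := sub_eq_zero.1 <| (mul_eq_zero.1 (by
    linear_combination p e₁ * hq_rel - q e₁ * hp_rel :
      (p e₁ * q e₂ - p e₂ * q e₁) * (y - α) = 0)).resolve_left (sub_ne_zero.2 hpq)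
  rw [h₁₂, hx, hy, add_comm]

end Plane

section Basis

variable {ι : Type*} {e : Basis ι K V}

theorem apply_basis_eq_smul_add_smul (he : ∀ a, KerInvariant B (e.coord a))
    (hsymm : ∀ u v, B u v = B v u) {a b : ι} (hab : a ≠ b) :
    B (e a) (e b) = e.coord a (B (e a) (e b)) • e a + e.coord b (B (e a) (e b)) • e b := by
  refine e.ext_elem fun c => ?_
  obtain rfl | hca := eq_or_ne a c
  · simp [hab.symm]
  obtain rfl | hcb := eq_or_ne b c
  · simp [hab]
  have hc : e.repr (B (e a) (e b)) c = 0 :=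
    (he c).apply_apply_eq_zero hsymm (by simp [hca]) (by simp [hcb])
  simp [hc, hca, hcb]

theorem exists_eq_smul_add_smul_of_kerInvariant_coord (he : ∀ a, KerInvariant B (e.coord a))
    (hsymm : ∀ u v, B u v = B v u) {p q : Dual K V} (hp : KerInvariant B p)
    (hq : KerInvariant B q) (hp_ne : ∀ a, p (e a) ≠ 0) (hq_ne : ∀ a, q (e a) ≠ 0)
    (hpq : ∀ a b, a ≠ b → p (e a) * q (e b) ≠ p (e b) * q (e a)) :
    ∃ m : Dual K V, ∀ u v, B u v = m u • v + m v • u := by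
  let m : Dual K V := e.constr K fun a => e.coord a (B (e a) (e a)) / 2
  have hdiag : ∀ a, B (e a) (e a) = (2 * m (e a)) • e a := fun a => by
    rw [e.constr_basis, mul_div_cancel₀ _ two_ne_zero]
    exact apply_basis_self_eq_smul he a
  have hoff : ∀ a b, a ≠ b → B (e a) (e b) = m (e a) • e b + m (e b) • e a := fun a b hab =>
    apply_apply_eq_of_kerInvariant_of_kerInvariant hp hq hsymm (hdiag a) (hdiag b)
      (apply_basis_eq_smul_add_smul he hsymm hab) (hp_ne a) (hp_ne b) (hq_ne a) (hq_ne b)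
      (hpq a b hab)
  have hB : B = (LinearMap.lsmul K V).comp m + ((LinearMap.lsmul K V).comp m).flip :=
    e.ext fun a => e.ext fun b => by
      obtain rfl | hab := eq_or_ne a b
      · simp [hdiag, two_mul, add_smul]
      · simp [hoff a b hab]
  exact ⟨m, fun u v => by rw [hB]; simp⟩

end Basis

theorem InGeneralPosition.exists_eq_smul_add_smul [FiniteDimensional K V] {ι : Type*} [Fintype ι]
    {w : ι → Dual K V} (hw : InGeneralPosition w) (hcard : finrank K V + 2 ≤ Fintype.card ι)
    (hB : ∀ a, KerInvariant B (w a)) (hsymm : ∀ u v, B u v = B v u) :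
    ∃ m : Dual K V, ∀ u v, B u v = m u • v + m v • u := by
  classical
  obtain ⟨s, -, hs⟩ := Finset.exists_subset_card_eq (s := (Finset.univ : Finset ι))
    (n := finrank K V) (by rw [Finset.card_univ]; lia)
  have hcompl : 1 < sᶜ.card := by rw [Finset.card_compl]; lia
  obtain ⟨p, hp, q, hq, hpq⟩ := Finset.one_lt_card.1 hcompl
  rw [Finset.mem_compl] at hp hq
  obtain ⟨e, he⟩ := hw.exists_basis_coord_eq hs
  exact exists_eq_smul_add_smul_of_kerInvariant_coord (fun a => he a ▸ hB a) hsymm (hB p) (hB q)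
    (hw.apply_basis_ne_zero hs he hp) (hw.apply_basis_ne_zero hs he hq)
    fun a b hab => hw.apply_basis_mul_ne hs he hp hq hpq hab

end Symmetric

end Algebra

section SecondOrder

variable {E : Type*} [NormedAddCommGroup E] [NormedSpace ℝ E] [CompleteSpace E]

theorem exists_hasDerivAt_of_contDiffOn {f : E → E} {s : Set E} (hs : IsOpen s)
    (hf : ContDiffOn ℝ 1 f s) {x : E} (hx : x ∈ s) :
    ∃ α : ℝ → E, α 0 = x ∧ ∃ ε > 0, ContDiffOn ℝ 1 α (Ioo (-ε) ε) ∧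
      ∀ t ∈ Ioo (-ε) ε, α t ∈ s ∧ HasDerivAt α (f (α t)) t := by
  obtain ⟨α, rfl, δ, hδ, hα⟩ := (hf.contDiffAt
    (hs.mem_nhds hx)).exists_forall_mem_closedBall_exists_eq_forall_mem_Ioo_hasDerivAt₀ 0
  have hδ_nhds : Ioo (0 - δ) (0 + δ) ∈ 𝓝 0 := Ioo_mem_nhds (by simpa) (by simpa)
  have hs_nhds : α ⁻¹' s ∈ 𝓝 0 :=
    (hα 0 (by simpa)).continuousAt.preimage_mem_nhds (hs.mem_nhds hx)
  obtain ⟨ε, hε, hball⟩ := Metric.mem_nhds_iff.1 (inter_mem hδ_nhds hs_nhds)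
  rw [Real.ball_eq_Ioo, zero_sub, zero_add] at hball
  have hderiv : ∀ t ∈ Ioo (-ε) ε, HasDerivAt α (f (α t)) t := fun t ht => hα t (hball ht).1
  refine ⟨α, rfl, ε, hε, ?_, fun t ht => ⟨(hball ht).2, hderiv t ht⟩⟩
  have hcont : ContinuousOn α (Ioo (-ε) ε) := HasDerivAt.continuousOn hderiv
  rw [← zero_add (1 : WithTop ℕ∞), contDiffOn_succ_iff_deriv_of_isOpen isOpen_Ioo]
  refine ⟨fun t ht => (hderiv t ht).differentiableAt.differentiableWithinAt, by simp, ?_⟩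
  exact contDiffOn_zero.2 <| (hf.continuousOn.comp hcont fun t ht => (hball ht).2).congr
    fun t ht => (hderiv t ht).deriv

theorem exists_deriv_deriv_eq_of_contDiffOn {F : E × E → E} {U : Set E} (hU : IsOpen U)
    (hF : ContDiffOn ℝ 1 F (U ×ˢ univ)) {x : E} (hx : x ∈ U) (v : E) :
    ∃ γ : ℝ → E, γ 0 = x ∧ deriv γ 0 = v ∧ ∃ ε > 0, ContDiffOn ℝ 2 γ (Ioo (-ε) ε) ∧
      ∀ t ∈ Ioo (-ε) ε, γ t ∈ U ∧ deriv (deriv γ) t = F (γ t, deriv γ t) := by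
  obtain ⟨α, hα₀, ε, hε, hα, hsol⟩ := exists_hasDerivAt_of_contDiffOn
    (f := fun z => (z.2, F z)) (hU.prod isOpen_univ) (contDiffOn_snd.prodMk hF)
    (mk_mem_prod hx (mem_univ v))
  have hfst : ∀ t ∈ Ioo (-ε) ε, HasDerivAt (fun s => (α s).1) (α t).2 t := fun t ht =>
    (hsol t ht).2.fst
  have hderiv : EqOn (deriv fun s => (α s).1) (fun s => (α s).2) (Ioo (-ε) ε) := fun t ht =>
    (hfst t ht).deriv
  have hzero : (0 : ℝ) ∈ Ioo (-ε) ε := by simpa using hε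
  refine ⟨fun t => (α t).1, by simp [hα₀], by simp [hderiv hzero, hα₀], ε, hε, ?_,
    fun t ht => ⟨(hsol t ht).1.1, ?_⟩⟩
  · rw [← one_add_one_eq_two, contDiffOn_succ_iff_deriv_of_isOpen isOpen_Ioo]
    exact ⟨fun t ht => (hfst t ht).differentiableAt.differentiableWithinAt, by simp,
      hα.snd.congr hderiv⟩
  · rw [(hderiv.eventuallyEq_of_mem (isOpen_Ioo.mem_nhds ht)).deriv_eq, hderiv ht]
    exact HasDerivAt.deriv (hsol t ht).2.snd

end SecondOrder

section Geodesics

variable {n : ℕ} {U : Set (Fin n → ℝ)} {Γ Γ' : Fin n → Fin n → Fin n → (Fin n → ℝ) → ℝ}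

/-- The bilinear map `(u, v) ↦ Γₓ(u, v)` with components `∑ᵢⱼ Γᵏᵢⱼ(x) uⁱ vʲ`, so that geodesics
are the solutions of `γ̈ = -Γ_γ(γ̇, γ̇)`. -/
noncomputable def christoffelMap (Γ : Fin n → Fin n → Fin n → (Fin n → ℝ) → ℝ) (x : Fin n → ℝ) :
    (Fin n → ℝ) →ₗ[ℝ] (Fin n → ℝ) →ₗ[ℝ] (Fin n → ℝ) :=
  Matrix.toLinearMap₂' ℝ (Matrix.of fun i j k => Γ k i j x)

theorem christoffelMap_apply (x u v : Fin n → ℝ) (k : Fin n) :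
    christoffelMap Γ x u v k = ∑ i, ∑ j, Γ k i j x * u i * v j := by
  simp [christoffelMap, Matrix.toLinearMap₂'_apply, Finset.sum_apply, mul_comm, mul_left_comm]

theorem christoffelMap_single (x : Fin n → ℝ) (i j k : Fin n) :
    christoffelMap Γ x (Pi.single i 1) (Pi.single j 1) k = Γ k i j x := by
  simp [christoffelMap_apply, Pi.single_apply]

theorem christoffelMap_comm {x : Fin n → ℝ} (hsymm : ∀ k i j, Γ k i j x = Γ k j i x)
    (u v : Fin n → ℝ) : christoffelMap Γ x u v = christoffelMap Γ x v u := by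
  funext k
  rw [christoffelMap_apply, christoffelMap_apply, Finset.sum_comm]
  exact Finset.sum_congr rfl fun i _ => Finset.sum_congr rfl fun j _ => by
    rw [hsymm k j i, mul_right_comm]

theorem contDiffOn_christoffelMap {r : WithTop ℕ∞} (hΓ : ∀ k i j, ContDiffOn ℝ r (Γ k i j) U) :
    ContDiffOn ℝ r (fun z : (Fin n → ℝ) × (Fin n → ℝ) => christoffelMap Γ z.1 z.2 z.2)
      (U ×ˢ univ) := by
  refine contDiffOn_pi.2 fun k => ?_
  simp only [christoffelMap_apply]
  have hΓ_fst : ∀ i j, ContDiffOn ℝ r (fun z : (Fin n → ℝ) × (Fin n → ℝ) => Γ k i j z.1)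
      (U ×ˢ univ) := fun i j => (hΓ k i j).comp contDiffOn_fst fun z hz => hz.1
  have hsnd : ∀ i, ContDiffOn ℝ r (fun z : (Fin n → ℝ) × (Fin n → ℝ) => z.2 i) (U ×ˢ univ) :=
    fun i => contDiffOn_pi.1 contDiffOn_snd i
  exact ContDiffOn.sum fun i _ => ContDiffOn.sum fun j _ =>
    ((hΓ_fst i j).mul (hsnd i)).mul (hsnd j)

theorem deriv_apply_eq {γ : ℝ → Fin n → ℝ} {t : ℝ} (hγ : DifferentiableAt ℝ γ t) (k : Fin n) :
    deriv (fun u => γ u k) t = deriv γ t k :=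
  (hasDerivAt_pi.1 hγ.hasDerivAt k).deriv

theorem isGeodesicOn_iff_deriv_deriv {I : Set ℝ} (hI : IsOpen I) {γ : ℝ → Fin n → ℝ} :
    IsGeodesicOn U Γ I γ ↔ (∀ t ∈ I, γ t ∈ U) ∧ ContDiffOn ℝ 2 γ I ∧
      ∀ t ∈ I, deriv (deriv γ) t = -christoffelMap Γ (γ t) (deriv γ t) (deriv γ t) := by
  refine and_congr_right fun _ => and_congr_right fun hγ => forall₂_congr fun t ht => ?_
  have hγ_deriv : ContDiffOn ℝ 1 (deriv γ) I := hγ.deriv_of_isOpen hI (by norm_num)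
  have hderiv : ∀ s ∈ I, ∀ k, deriv (fun u => γ u k) s = deriv γ s k := fun s hs k =>
    deriv_apply_eq ((hγ.contDiffAt (hI.mem_nhds hs)).differentiableAt two_ne_zero) k
  have hderiv₂ : ∀ k, deriv (fun s => deriv (fun u => γ u k) s) t = deriv (deriv γ) t k := by
    intro k
    have hev : (fun s => deriv (fun u => γ u k) s) =ᶠ[𝓝 t] fun s => deriv γ s k :=
      eventuallyEq_of_mem (hI.mem_nhds ht) fun s hs => hderiv s hs k
    rw [hev.deriv_eq]
    exact deriv_apply_eq
      ((hγ_deriv.contDiffAt (hI.mem_nhds ht)).differentiableAt one_ne_zero) k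
  simp only [hderiv₂, hderiv t ht, eq_neg_iff_add_eq_zero, funext_iff, Pi.add_apply,
    Pi.zero_apply, christoffelMap_apply]

theorem exists_isGeodesicOn (hU : IsOpen U) (hΓ : ∀ k i j, ContDiffOn ℝ 1 (Γ k i j) U)
    {x : Fin n → ℝ} (hx : x ∈ U) (v : Fin n → ℝ) :
    ∃ γ : ℝ → Fin n → ℝ, γ 0 = x ∧ deriv γ 0 = v ∧ ∃ ε > 0, IsGeodesicOn U Γ (Ioo (-ε) ε) γ := by
  obtain ⟨γ, hγ₀, hγ₁, ε, hε, hγ, hode⟩ :=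
    exists_deriv_deriv_eq_of_contDiffOn hU (contDiffOn_christoffelMap hΓ).neg hx v
  exact ⟨γ, hγ₀, hγ₁, ε, hε, (isGeodesicOn_iff_deriv_deriv isOpen_Ioo).2
    ⟨fun t ht => (hode t ht).1, hγ, fun t ht => (hode t ht).2⟩⟩

theorem IsGeodesicOn.hasDerivAt_dotProduct {I : Set ℝ} (hI : IsOpen I) {γ : ℝ → Fin n → ℝ}
    (hγ : IsGeodesicOn U Γ I γ) {ω : (Fin n → ℝ) → Fin n → ℝ} {t : ℝ} (ht : t ∈ I)
    (hω : DifferentiableAt ℝ ω (γ t)) :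
    HasDerivAt (fun s => ω (γ s) ⬝ᵥ deriv γ s) (fderiv ℝ ω (γ t) (deriv γ t) ⬝ᵥ deriv γ t -
      ω (γ t) ⬝ᵥ christoffelMap Γ (γ t) (deriv γ t) (deriv γ t)) t := by
  obtain ⟨-, hcd, hode⟩ := (isGeodesicOn_iff_deriv_deriv hI).1 hγ
  have hvel : HasDerivAt γ (deriv γ t) t :=
    ((hcd.contDiffAt (hI.mem_nhds ht)).differentiableAt two_ne_zero).hasDerivAt
  have hacc : HasDerivAt (deriv γ) (deriv (deriv γ) t) t :=
    (((hcd.deriv_of_isOpen (m := 1) hI (by norm_num)).contDiffAt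
      (hI.mem_nhds ht)).differentiableAt one_ne_zero).hasDerivAt
  rw [hode t ht] at hacc
  have hform : HasDerivAt (fun s => ω (γ s)) (fderiv ℝ ω (γ t) (deriv γ t)) t :=
    hω.hasFDerivAt.comp_hasDerivAt t hvel
  have hsum := HasDerivAt.fun_sum fun k (_ : k ∈ Finset.univ) =>
    (hasDerivAt_pi.1 hform k).mul (hasDerivAt_pi.1 hacc k)
  refine hsum.congr_deriv ?_
  simp [Finset.sum_add_distrib, dotProduct, sub_eq_add_neg]

/-- Infinitesimal total geodesy: differentiate `ω(γ̇) = 0` along the geodesic with initial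
velocity `v`. -/
theorem TotallyGeodesic.dotProduct_christoffelMap {ω : (Fin n → ℝ) → Fin n → ℝ}
    (hg : TotallyGeodesic U Γ ω) (hU : IsOpen U) (hΓ : ∀ k i j, ContDiffOn ℝ 1 (Γ k i j) U)
    {x : Fin n → ℝ} (hx : x ∈ U) (hω : DifferentiableAt ℝ ω x) {v : Fin n → ℝ}
    (hv : ω x ⬝ᵥ v = 0) : ω x ⬝ᵥ christoffelMap Γ x v v = fderiv ℝ ω x v ⬝ᵥ v := by
  obtain ⟨γ, rfl, rfl, ε, hε, hγ⟩ := exists_isGeodesicOn hU hΓ hx v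
  have h₀ : (0 : ℝ) ∈ Ioo (-ε) ε := by simpa using hε
  have hderiv : ∀ t ∈ Ioo (-ε) ε, ∀ k, deriv (fun u => γ u k) t = deriv γ t k := fun t ht =>
    deriv_apply_eq ((hγ.2.1.contDiffAt (isOpen_Ioo.mem_nhds ht)).differentiableAt two_ne_zero)
  have htangent : (fun t => ω (γ t) ⬝ᵥ deriv γ t) =ᶠ[𝓝 0] fun _ => 0 :=
    eventuallyEq_of_mem (isOpen_Ioo.mem_nhds h₀) fun t ht => by
      simpa only [hderiv t ht, dotProduct] using hg _ isOpen_Ioo ordConnected_Ioo h₀ γ hγ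
        (by simpa only [hderiv 0 h₀, dotProduct] using hv) t ht
  have hunique := (hγ.hasDerivAt_dotProduct isOpen_Ioo h₀ hω).unique
    ((hasDerivAt_const 0 (0 : ℝ)).congr_of_eventuallyEq htangent)
  exact (sub_eq_zero.1 hunique).symm

theorem TotallyGeodesic.kerInvariant_sub {ω : (Fin n → ℝ) → Fin n → ℝ}
    (hg : TotallyGeodesic U Γ ω) (hg' : TotallyGeodesic U Γ' ω) (hU : IsOpen U)
    (hΓ : ∀ k i j, ContDiffOn ℝ 1 (Γ k i j) U) (hΓ' : ∀ k i j, ContDiffOn ℝ 1 (Γ' k i j) U)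
    {x : Fin n → ℝ} (hx : x ∈ U) (hω : DifferentiableAt ℝ ω x) :
    KerInvariant (christoffelMap Γ' x - christoffelMap Γ x) (dotProductEquiv ℝ (Fin n) (ω x)) := by
  intro v hv
  have hΓv := hg.dotProduct_christoffelMap hU hΓ hx hω hv
  have hΓv' := hg'.dotProduct_christoffelMap hU hΓ' hx hω hv
  simp [dotProduct_sub, hΓv, hΓv']

end Geodesics

section Projective

variable {n : ℕ} {U : Set (Fin n → ℝ)} {Γ Γ' : Fin n → Fin n → Fin n → (Fin n → ℝ) → ℝ}

/-- Taking the trace of the pointwise relation gives `ρⱼ = (∑ₖ (Γ'ᵏₖⱼ - Γᵏₖⱼ)) / (n + 1)`, which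
makes the form smooth. -/
theorem projEquiv_of_forall_exists (hΓ : ∀ k i j, ContDiffOn ℝ (⊤ : ℕ∞) (Γ k i j) U)
    (hΓ' : ∀ k i j, ContDiffOn ℝ (⊤ : ℕ∞) (Γ' k i j) U)
    (hpt : ∀ x ∈ U, ∃ m : Dual ℝ (Fin n → ℝ), ∀ u v,
      (christoffelMap Γ' x - christoffelMap Γ x) u v = m u • v + m v • u) :
    ProjEquiv U Γ Γ' := by
  refine ⟨fun x j => (∑ k, (Γ' k k j x - Γ k k j x)) / (n + 1), ?_, fun x hx k i j => ?_⟩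
  · exact contDiffOn_pi.2 fun j => (ContDiffOn.sum fun k _ =>
      (hΓ' k k j).sub (hΓ k k j)).div_const _
  obtain ⟨m, hm⟩ := hpt x hx
  have hcoord : ∀ k i j, Γ' k i j x - Γ k i j x =
      (if k = i then m (Pi.single j 1) else 0) + (if k = j then m (Pi.single i 1) else 0) := by
    intro k i j
    have h := congrFun (hm (Pi.single i 1) (Pi.single j 1)) k
    simp only [LinearMap.sub_apply, Pi.sub_apply, christoffelMap_single, Pi.add_apply,
      Pi.smul_apply, Pi.single_apply, smul_eq_mul, mul_ite, mul_one, mul_zero] at h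
    rw [h, add_comm]
  have htrace : ∀ l, (∑ k, (Γ' k k l x - Γ k k l x)) / (n + 1) = m (Pi.single l 1) := by
    intro l
    have hsum : ∑ k, (Γ' k k l x - Γ k k l x) = (n + 1) * m (Pi.single l 1) := by
      simp [hcoord, Finset.sum_add_distrib, add_mul]
    rw [hsum, mul_div_cancel_left₀ _ (by positivity)]
  simp only [htrace, add_assoc, ← hcoord, add_sub_cancel]

theorem IsWeb.inGeneralPosition {d : ℕ} {ωs : Fin d → (Fin n → ℝ) → Fin n → ℝ}
    (hweb : IsWeb U ωs) {x : Fin n → ℝ} (hx : x ∈ U) :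
    InGeneralPosition fun i => dotProductEquiv ℝ (Fin n) (ωs i x) := by
  intro s hs
  let σ := s.orderIsoOfFin (hs.trans (finrank_fin_fun ℝ))
  have hσ : LinearIndependent ℝ fun i => ωs (σ i) x :=
    hweb.2 x hx (fun i => σ i) (Subtype.val_injective.comp σ.injective)
  exact (linearIndependent_equiv σ.toEquiv).1 (hσ.map' _ (dotProductEquiv ℝ (Fin n)).ker)

end Projective

theorem statement9_general {n : ℕ} {ι : Type*} [Fintype ι] (hcard : n + 2 ≤ Fintype.card ι)
    {U : Set (Fin n → ℝ)} (hU : IsOpen U) {ωs : ι → (Fin n → ℝ) → Fin n → ℝ}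
    (hωs : ∀ i, DifferentiableOn ℝ (ωs i) U)
    (hpos : ∀ x ∈ U, InGeneralPosition fun i => dotProductEquiv ℝ (Fin n) (ωs i x))
    {Γ Γ' : Fin n → Fin n → Fin n → (Fin n → ℝ) → ℝ}
    (hΓ : IsTorsionFreeConn U Γ) (hΓ' : IsTorsionFreeConn U Γ')
    (hg : ∀ i, TotallyGeodesic U Γ (ωs i)) (hg' : ∀ i, TotallyGeodesic U Γ' (ωs i)) :
    ProjEquiv U Γ Γ' := by
  have hone : (1 : WithTop ℕ∞) ≤ (⊤ : ℕ∞) := by exact_mod_cast le_top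
  refine projEquiv_of_forall_exists hΓ.1 hΓ'.1 fun x hx => ?_
  refine (hpos x hx).exists_eq_smul_add_smul (by simpa using hcard) (fun i => ?_) fun u v => ?_
  · exact (hg i).kerInvariant_sub (hg' i) hU (fun k i j => (hΓ.1 k i j).of_le hone)
      (fun k i j => (hΓ'.1 k i j).of_le hone) hx ((hωs i).differentiableAt (hU.mem_nhds hx))
  · simp only [LinearMap.sub_apply, christoffelMap_comm (fun k i j => hΓ.2 k i j x) u v,
      christoffelMap_comm (fun k i j => hΓ'.2 k i j x) u v]

/-- any two torsion-free connections for which a given `(n+2)`-web of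
hypersurfaces is geodesic are projectively equivalent; hence an `(n+2)`-web determines a
unique projective structure on `U`. -/
theorem statement9 {n : ℕ} (hn : 2 ≤ n) (U : Set (Fin n → ℝ)) (hU : IsOpen U)
    (hUconn : IsConnected U)
    (ωs : Fin (n + 2) → (Fin n → ℝ) → Fin n → ℝ) (hweb : IsWeb U ωs)
    (Γ Γ' : Fin n → Fin n → Fin n → (Fin n → ℝ) → ℝ)
    (hΓ : IsTorsionFreeConn U Γ) (hΓ' : IsTorsionFreeConn U Γ')
    (hg : ∀ i, TotallyGeodesic U Γ (ωs i)) (hg' : ∀ i, TotallyGeodesic U Γ' (ωs i)) :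
    ProjEquiv U Γ Γ' :=
  statement9_general (by simp) hU (fun i => (hweb.1 i).1.differentiableOn (by simp))
    (fun _ hx => hweb.inGeneralPosition hx) hΓ hΓ' hg hg'
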